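/- Let A, B be n×n complex positive definite matrices. For every t ∈ (0, 1), λ_i(A ♮_t B) ≤ λ_i(A ◇_t B) for all i = 1, …, n (eigenvalues in nonincreasing order), and equality of all eigenvalues holds if and only if A = B. -/

import Mathlib

open scoped ComplexOrder Matrix

noncomputable section

/-- Real power of a (positive definite) matrix via the continuous functional calculus. -/
def mpow {n : ℕ} (A : Matrix (Fin n) (Fin n) ℂ) (t : ℝ) : Matrix (Fin n) (Fin n) ℂ :=
  cfc (fun x : ℝ => x ^ t) A

/-- The matrix logarithm of a (positive definite) matrix via the continuous functional calculus. -/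
def mlog {n : ℕ} (A : Matrix (Fin n) (Fin n) ℂ) : Matrix (Fin n) (Fin n) ℂ :=
  cfc Real.log A

/-- The metric geometric mean `A ♯ₜ B = A^{1/2} (A^{-1/2} B A^{-1/2})^t A^{1/2}`.
`A ♯ B` is `gmean A B (1/2)`. -/
def gmean {n : ℕ} (A B : Matrix (Fin n) (Fin n) ℂ) (t : ℝ) : Matrix (Fin n) (Fin n) ℂ :=
  mpow A (1/2) * mpow (mpow A (-(1/2)) * B * mpow A (-(1/2))) t * mpow A (1/2)

/-- The Loewner order: `A ≤ B` iff `B - A` is positive semidefinite. -/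
def LoewnerLE {n : ℕ} (A B : Matrix (Fin n) (Fin n) ℂ) : Prop :=
  (B - A).PosSemidef

/-- The near order: `A ⪯ B` iff `I ≤ A⁻¹ ♯ B` in the Loewner order. -/
def NearLE {n : ℕ} (A B : Matrix (Fin n) (Fin n) ℂ) : Prop :=
  LoewnerLE 1 (gmean A⁻¹ B (1/2))

/-- The spectral geometric mean `A ♮ₜ B = (A⁻¹ ♯ B)^t A (A⁻¹ ♯ B)^t`. -/
def smean {n : ℕ} (A B : Matrix (Fin n) (Fin n) ℂ) (t : ℝ) : Matrix (Fin n) (Fin n) ℂ :=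
  mpow (gmean A⁻¹ B (1/2)) t * A * mpow (gmean A⁻¹ B (1/2)) t

/-- The Wasserstein mean `A ◇ₜ B = [(1-t)I + t(A⁻¹ ♯ B)] A [(1-t)I + t(A⁻¹ ♯ B)]`. -/
def wmean {n : ℕ} (A B : Matrix (Fin n) (Fin n) ℂ) (t : ℝ) : Matrix (Fin n) (Fin n) ℂ :=
  (((1 - t : ℝ) : ℂ) • (1 : Matrix (Fin n) (Fin n) ℂ) + ((t : ℝ) : ℂ) • gmean A⁻¹ B (1/2)) * A *
    (((1 - t : ℝ) : ℂ) • (1 : Matrix (Fin n) (Fin n) ℂ) + ((t : ℝ) : ℂ) • gmean A⁻¹ B (1/2))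

/-- The arithmetic mean `A ∇ₜ B = (1-t)A + tB`. -/
def amean {n : ℕ} (A B : Matrix (Fin n) (Fin n) ℂ) (t : ℝ) : Matrix (Fin n) (Fin n) ℂ :=
  ((1 - t : ℝ) : ℂ) • A + ((t : ℝ) : ℂ) • B

/-- The matrix absolute value `|X| = (XᴴX)^{1/2}`. -/
def matAbs {n : ℕ} (X : Matrix (Fin n) (Fin n) ℂ) : Matrix (Fin n) (Fin n) ℂ :=
  mpow (Xᴴ * X) (1/2)

/-- The eigenvalues of a Hermitian matrix listed in nonincreasing order:
`eigDesc hA i` is `λ_{i+1}(A)`, so `eigDesc hA 0 = λ₁(A) ≥ eigDesc hA 1 = λ₂(A) ≥ ⋯`. -/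
def eigDesc {n : ℕ} {A : Matrix (Fin n) (Fin n) ℂ} (hA : A.IsHermitian) : Fin n → ℝ :=
  fun i => (hA.eigenvalues ∘ Tuple.sort hA.eigenvalues) i.rev

/-!
Put `G = A⁻¹ ♯ B`. Both means have the form `P A P`, with `P = G ^ t` for `A ♮ₜ B` and
`P = (1 - t) I + t G = I ∇ₜ G` for `A ◇ₜ B`, and `P A P` has the same characteristic polynomial as
`A^{1/2} P² A^{1/2}`. The scalar inequality `x ^ t ≤ 1 - t + t x` gives `(G ^ t)² ≤ (I ∇ₜ G)²`,
because both sides are functions of `G`, and Weyl's monotonicity theorem compares the eigenvalues.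
If all of them agree, the difference of the two congruences by `A^{1/2}` is positive semidefinite
of trace zero, so `G ^ t = I ∇ₜ G`. Equality in the scalar inequality then forces `G = I`, which
is `A = B` by the Riccati equation `G A G = B`.
-/

section InnerProductSpace

open scoped InnerProductSpace

variable {𝕜 E ι : Type*} [RCLike 𝕜] [NormedAddCommGroup E] [InnerProductSpace 𝕜 E] [Fintype ι]

lemma exists_ne_zero_forall_inner_eq_zero (v : ι → E) (hv : Fintype.card ι < Module.finrank 𝕜 E) :
    ∃ x : E, x ≠ 0 ∧ ∀ i, ⟪v i, x⟫_𝕜 = 0 := by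
  have : FiniteDimensional 𝕜 E := .of_finrank_pos (by omega)
  have hspan : Submodule.span 𝕜 (Set.range v) ≠ ⊤ := by
    intro h
    have hle := finrank_range_le_card (R := 𝕜) v
    rw [Set.finrank, h, finrank_top] at hle
    omega
  obtain ⟨x, hx, hx0⟩ := Submodule.exists_mem_ne_zero_of_ne_bot
    (mt Submodule.orthogonal_eq_bot_iff.1 hspan)
  exact ⟨x, hx0, fun i => hx _ (Submodule.subset_span ⟨i, rfl⟩)⟩

variable (b : OrthonormalBasis ι 𝕜 E) {T : E →ₗ[𝕜] E} {μ : ι → ℝ}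

lemma re_inner_map_self_eq_sum (hT : ∀ i, T (b i) = (μ i : 𝕜) • b i) (x : E) :
    RCLike.re ⟪x, T x⟫_𝕜 = ∑ i, μ i * ‖⟪b i, x⟫_𝕜‖ ^ 2 := by
  have hTx : T x = ∑ i, (⟪b i, x⟫_𝕜 * μ i) • b i := by
    conv_lhs => rw [← b.sum_repr' x]
    simp only [map_sum, map_smul, hT, smul_smul]
  rw [hTx, inner_sum, map_sum]
  refine Finset.sum_congr rfl fun i _ => ?_
  rw [inner_smul_right, ← inner_conj_symm x, mul_right_comm, RCLike.mul_conj]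
  norm_cast
  exact mul_comm _ _

lemma mul_norm_sq_le_re_inner_map_self (hT : ∀ i, T (b i) = (μ i : 𝕜) • b i) {m : ℝ} {x : E}
    (hx : ∀ i, ⟪b i, x⟫_𝕜 ≠ 0 → m ≤ μ i) : m * ‖x‖ ^ 2 ≤ RCLike.re ⟪x, T x⟫_𝕜 := by
  rw [re_inner_map_self_eq_sum b hT, ← b.sum_sq_norm_inner_right x, Finset.mul_sum]
  refine Finset.sum_le_sum fun i _ => ?_
  rcases eq_or_ne ⟪b i, x⟫_𝕜 0 with h | h
  · simp [h]
  · exact mul_le_mul_of_nonneg_right (hx i h) (sq_nonneg _)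

lemma re_inner_map_self_le_mul_norm_sq (hT : ∀ i, T (b i) = (μ i : 𝕜) • b i) {m : ℝ} {x : E}
    (hx : ∀ i, ⟪b i, x⟫_𝕜 ≠ 0 → μ i ≤ m) : RCLike.re ⟪x, T x⟫_𝕜 ≤ m * ‖x‖ ^ 2 := by
  have := mul_norm_sq_le_re_inner_map_self b (T := -T) (μ := -μ) (m := -m) (x := x)
    (fun i => by simp [hT]) (fun i hi => neg_le_neg (hx i hi))
  simpa using this

theorem eigenvalue_le_of_forall_re_inner_le [LinearOrder ι] (c : OrthonormalBasis ι 𝕜 E)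
    {S : E →ₗ[𝕜] E} {ν : ι → ℝ} (hT : ∀ i, T (b i) = (μ i : 𝕜) • b i)
    (hS : ∀ i, S (c i) = (ν i : 𝕜) • c i) (hμ : Antitone μ) (hν : Antitone ν)
    (hTS : ∀ x, RCLike.re ⟪x, T x⟫_𝕜 ≤ RCLike.re ⟪x, S x⟫_𝕜) (i : ι) : μ i ≤ ν i := by
  -- `card ι - 1` linear conditions put `x` in the span of the `b j` with `j ≤ i` and in the span
  -- of the `c j` with `i ≤ j`.
  obtain ⟨x, hx0, hx⟩ := exists_ne_zero_forall_inner_eq_zero (𝕜 := 𝕜)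
    (fun j : {j // j ≠ i} => if i < j then b j else c j) <| by
      rw [Module.finrank_eq_card_basis b.toBasis]
      exact Fintype.card_subtype_lt (not_not.2 rfl)
  have hb (j : ι) (hj : ⟪b j, x⟫_𝕜 ≠ 0) : μ i ≤ μ j := by
    refine hμ (not_lt.1 fun hij => hj ?_)
    simpa only [if_pos hij] using hx ⟨j, hij.ne'⟩
  have hc (j : ι) (hj : ⟪c j, x⟫_𝕜 ≠ 0) : ν j ≤ ν i := by
    refine hν (not_lt.1 fun hji => hj ?_)
    simpa only [if_neg hji.not_gt] using hx ⟨j, hji.ne⟩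
  have hle : μ i * ‖x‖ ^ 2 ≤ ν i * ‖x‖ ^ 2 :=
    calc μ i * ‖x‖ ^ 2 ≤ RCLike.re ⟪x, T x⟫_𝕜 := mul_norm_sq_le_re_inner_map_self b hT hb
      _ ≤ RCLike.re ⟪x, S x⟫_𝕜 := hTS x
      _ ≤ ν i * ‖x‖ ^ 2 := re_inner_map_self_le_mul_norm_sq c hS hc
  exact le_of_mul_le_mul_right hle (by positivity)

end InnerProductSpace

lemma charpoly_mul_sq_mul {n R : Type*} [Fintype n] [DecidableEq n] [CommRing R]
    (M N : Matrix n n R) : (M * N ^ 2 * M).charpoly = (N * M ^ 2 * N).charpoly := by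
  rw [sq, sq, show M * (N * N) * M = M * N * (N * M) by noncomm_ring,
    Matrix.charpoly_mul_comm, show N * M * (M * N) = N * (M * M) * N by noncomm_ring]

lemma rpow_le_one_sub_add_mul {x t : ℝ} (hx : 0 ≤ x) (ht : 0 ≤ t) (ht1 : t ≤ 1) :
    x ^ t ≤ 1 - t + t * x := by
  have := rpow_one_add_le_one_add_mul_self (s := x - 1) (by linarith) ht ht1
  rw [add_sub_cancel] at this
  linarith

lemma rpow_eq_one_sub_add_mul_iff {x t : ℝ} (hx : 0 ≤ x) (ht : 0 < t) (ht1 : t < 1) :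
    x ^ t = 1 - t + t * x ↔ x = 1 := by
  refine ⟨fun h => ?_, fun h => by simp [h]⟩
  by_contra hne
  have := rpow_one_add_lt_one_add_mul_self (s := x - 1) (by linarith) (sub_ne_zero.2 hne) ht ht1
  rw [add_sub_cancel] at this
  linarith

open scoped MatrixOrder

section Eigenvalues

variable {n : ℕ} {H K : Matrix (Fin n) (Fin n) ℂ}

lemma eigDesc_antitone (hH : H.IsHermitian) : Antitone (eigDesc hH) := fun _ _ h =>
  Tuple.monotone_sort hH.eigenvalues (Fin.rev_le_rev.2 h)

lemma eigDesc_eq_of_charpoly_eq (hH : H.IsHermitian) (hK : K.IsHermitian)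
    (h : H.charpoly = K.charpoly) : eigDesc hH = eigDesc hK := by
  unfold eigDesc
  rw [(hH.eigenvalues_eq_eigenvalues_iff hK).2 h]

lemma trace_eq_sum_eigDesc (hH : H.IsHermitian) : H.trace = ∑ i, (eigDesc hH i : ℂ) := by
  rw [hH.trace_eq_sum_eigenvalues]
  exact (Equiv.sum_comp (Fin.revPerm.trans (Tuple.sort hH.eigenvalues)) _).symm

lemma exists_orthonormalBasis_eigDesc (hH : H.IsHermitian) :
    ∃ b : OrthonormalBasis (Fin n) ℂ (EuclideanSpace ℂ (Fin n)),
      ∀ i, H.toEuclideanLin (b i) = (eigDesc hH i : ℂ) • b i := by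
  refine ⟨hH.eigenvectorBasis.reindex (Fin.revPerm.trans (Tuple.sort hH.eigenvalues)).symm,
    fun i => ?_⟩
  rw [OrthonormalBasis.reindex_apply, Equiv.symm_symm]
  exact congrArg (WithLp.toLp 2) (hH.mulVec_eigenvectorBasis _)

lemma eigDesc_mono (hH : H.IsHermitian) (hK : K.IsHermitian) (hHK : H ≤ K) :
    eigDesc hH ≤ eigDesc hK := by
  obtain ⟨b, hb⟩ := exists_orthonormalBasis_eigDesc hH
  obtain ⟨c, hc⟩ := exists_orthonormalBasis_eigDesc hK
  refine eigenvalue_le_of_forall_re_inner_le b c hb hc (eigDesc_antitone hH)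
    (eigDesc_antitone hK) fun x => ?_
  have := (Matrix.isPositive_toEuclideanLin_iff.2 hHK).re_inner_nonneg_right x
  rwa [map_sub, LinearMap.sub_apply, inner_sub_right, map_sub, sub_nonneg] at this

lemma eq_of_le_of_eigDesc_eq (hH : H.IsHermitian) (hK : K.IsHermitian) (hHK : H ≤ K)
    (h : eigDesc hH = eigDesc hK) : H = K := by
  have htrace : (K - H).trace = 0 := by
    rw [Matrix.trace_sub, trace_eq_sum_eigDesc hH, trace_eq_sum_eigDesc hK, h, sub_self]
  exact (sub_eq_zero.1 (hHK.trace_eq_zero_iff.1 htrace)).symm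

variable {A P Q : Matrix (Fin n) (Fin n) ℂ}

lemma isHermitian_sqrt_mul_sq_mul_sqrt (A : Matrix (Fin n) (Fin n) ℂ) (hP : P.IsHermitian) :
    (CFC.sqrt A * P ^ 2 * CFC.sqrt A).IsHermitian :=
  (hP.pow 2).isSelfAdjoint.conjugate_self (IsSelfAdjoint.of_nonneg (CFC.sqrt_nonneg A))

lemma eigDesc_mul_mul_self (hA : 0 ≤ A) (hP : P.IsHermitian) (hPA : (P * A * P).IsHermitian) :
    eigDesc hPA = eigDesc (isHermitian_sqrt_mul_sq_mul_sqrt A hP) := by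
  refine eigDesc_eq_of_charpoly_eq _ _ ?_
  rw [← charpoly_mul_sq_mul, CFC.sq_sqrt A]

lemma eigDesc_mul_mul_self_mono (hA : 0 ≤ A) (hP : P.IsHermitian) (hQ : Q.IsHermitian)
    (hPQ : P ^ 2 ≤ Q ^ 2) (hPA : (P * A * P).IsHermitian) (hQA : (Q * A * Q).IsHermitian) :
    eigDesc hPA ≤ eigDesc hQA := by
  rw [eigDesc_mul_mul_self hA hP, eigDesc_mul_mul_self hA hQ]
  exact eigDesc_mono _ _ (conjugate_le_conjugate_of_nonneg hPQ (CFC.sqrt_nonneg A))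

lemma eigDesc_mul_mul_self_eq_iff (hA : A.PosDef) (hP : 0 ≤ P) (hQ : 0 ≤ Q)
    (hPQ : P ^ 2 ≤ Q ^ 2) (hPA : (P * A * P).IsHermitian) (hQA : (Q * A * Q).IsHermitian) :
    eigDesc hPA = eigDesc hQA ↔ P = Q := by
  refine ⟨fun h => ?_, fun h => by subst h; rfl⟩
  have hA0 : 0 ≤ A := hA.posSemidef.nonneg
  rw [eigDesc_mul_mul_self hA0 (IsSelfAdjoint.of_nonneg hP),
    eigDesc_mul_mul_self hA0 (IsSelfAdjoint.of_nonneg hQ)] at h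
  have hconj := eq_of_le_of_eigDesc_eq _ _
    (conjugate_le_conjugate_of_nonneg hPQ (CFC.sqrt_nonneg A)) h
  have hu : IsUnit (CFC.sqrt A) := (CFC.isUnit_sqrt_iff A).2 hA.isUnit
  exact (CFC.sq_eq_sq_iff P Q).1 (hu.mul_left_cancel (hu.mul_right_cancel hconj))

end Eigenvalues

section Means

variable {n : ℕ} {A B C G X : Matrix (Fin n) (Fin n) ℂ} {t : ℝ}

lemma continuousOn_spectrum (f : ℝ → ℝ) (A : Matrix (Fin n) (Fin n) ℂ) :
    ContinuousOn f (spectrum ℝ A) :=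
  Matrix.finite_real_spectrum.continuousOn f

lemma mpow_eq_rpow (hA : 0 ≤ A) (t : ℝ) : mpow A t = A ^ t :=
  (CFC.rpow_eq_cfc_real hA).symm

lemma mpow_nonneg (hA : 0 ≤ A) (t : ℝ) : 0 ≤ mpow A t := by
  rw [mpow_eq_rpow hA]
  exact CFC.rpow_nonneg

lemma mpow_neg_mul_mpow (hA : A.PosDef) (t : ℝ) : mpow A (-t) * mpow A t = 1 := by
  have hA0 : 0 ≤ A := hA.posSemidef.nonneg
  rw [mpow_eq_rpow hA0, mpow_eq_rpow hA0]
  exact CFC.rpow_neg_mul_rpow t hA.isStrictlyPositive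

lemma mpow_neg_half_mul_self (hA : A.PosDef) : mpow A (-(1 / 2)) * mpow A (-(1 / 2)) = A⁻¹ := by
  have hA0 : 0 ≤ A := hA.posSemidef.nonneg
  rw [mpow_eq_rpow hA0, ← CFC.rpow_add hA.isUnit, ← neg_add, add_halves,
    ← CFC.inverse_eq_rpow_neg_one hA.isStrictlyPositive, Matrix.nonsing_inv_eq_ringInverse]

lemma gmean_nonneg (A : Matrix (Fin n) (Fin n) ℂ) (hB : 0 ≤ B) (t : ℝ) : 0 ≤ gmean A B t := by
  have hsa (s : ℝ) : IsSelfAdjoint (mpow A s) := cfc_predicate _ A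
  exact (hsa _).conjugate_nonneg (mpow_nonneg ((hsa _).conjugate_nonneg hB) t)

theorem gmean_half_eq_iff_riccati (hC : C.PosDef) (hB : 0 ≤ B) (hX : 0 ≤ X) :
    gmean C B (1 / 2) = X ↔ X * C⁻¹ * X = B := by
  have hSR : mpow C (-(1 / 2)) * mpow C (1 / 2) = 1 := mpow_neg_mul_mpow hC _
  have hRS : mpow C (1 / 2) * mpow C (-(1 / 2)) = 1 := mul_eq_one_comm.1 hSR
  have hSS : mpow C (-(1 / 2)) * mpow C (-(1 / 2)) = C⁻¹ := mpow_neg_half_mul_self hC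
  have hS0 : 0 ≤ mpow C (-(1 / 2)) := mpow_nonneg hC.posSemidef.nonneg _
  rw [gmean]
  set R := mpow C (1 / 2)
  set S := mpow C (-(1 / 2))
  have hS : IsUnit S := .of_mul_eq_one R hSR
  have hY : 0 ≤ S * B * S := conjugate_nonneg_of_nonneg hB hS0
  have hcancel (Z : Matrix (Fin n) (Fin n) ℂ) : S * (R * Z * R) * S = Z := by
    rw [show S * (R * Z * R) * S = S * R * Z * (R * S) by noncomm_ring, hSR, hRS, one_mul, mul_one]
  calc R * mpow (S * B * S) (1 / 2) * R = X
      ↔ S * (R * mpow (S * B * S) (1 / 2) * R) * S = S * X * S := by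
        rw [hS.mul_left_inj, hS.mul_right_inj]
    _ ↔ CFC.sqrt (S * B * S) = S * X * S := by
        rw [hcancel, mpow_eq_rpow hY, CFC.sqrt_eq_rpow]
    _ ↔ S * X * S * (S * X * S) = S * B * S :=
        CFC.sqrt_eq_iff _ _ hY (conjugate_nonneg_of_nonneg hX hS0)
    _ ↔ S * (X * C⁻¹ * X) * S = S * B * S := by simp only [← hSS, mul_assoc]
    _ ↔ X * C⁻¹ * X = B := by rw [hS.mul_left_inj, hS.mul_right_inj]

lemma gmean_inv_half_eq_one_iff (hA : A.PosDef) (hB : 0 ≤ B) :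
    gmean A⁻¹ B (1 / 2) = 1 ↔ A = B := by
  rw [gmean_half_eq_iff_riccati hA.inv hB zero_le_one,
    Matrix.nonsing_inv_nonsing_inv A (A.isUnit_iff_isUnit_det.1 hA.isUnit), one_mul, mul_one]

lemma amean_one_eq_cfc (hG : IsSelfAdjoint G) (t : ℝ) :
    amean 1 G t = cfc (fun x : ℝ => 1 - t + t * x) G := by
  rw [cfc_add (a := G) (fun _ => 1 - t) (fun x => t * x), cfc_const (1 - t) G hG,
    cfc_const_mul t (fun x => x) G, cfc_id' ℝ G hG, Algebra.algebraMap_eq_smul_one]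
  rfl

lemma amean_one_nonneg (hG : 0 ≤ G) (ht : 0 ≤ t) (ht1 : t ≤ 1) : 0 ≤ amean 1 G t := by
  rw [amean_one_eq_cfc (IsSelfAdjoint.of_nonneg hG)]
  refine cfc_nonneg fun x hx => ?_
  have := spectrum_nonneg_of_nonneg hG hx
  nlinarith

lemma mpow_sq_le_amean_one_sq (hG : 0 ≤ G) (ht : 0 ≤ t) (ht1 : t ≤ 1) :
    mpow G t ^ 2 ≤ amean 1 G t ^ 2 := by
  have hsa := IsSelfAdjoint.of_nonneg hG
  have hcont f := continuousOn_spectrum f G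
  rw [amean_one_eq_cfc hsa, mpow, ← cfc_pow _ 2 G (hcont _), ← cfc_pow _ 2 G]
  refine cfc_mono (fun x hx => ?_) (hcont _)
  have hx0 : 0 ≤ x := spectrum_nonneg_of_nonneg hG hx
  exact pow_le_pow_left₀ (Real.rpow_nonneg hx0 t) (rpow_le_one_sub_add_mul hx0 ht ht1) 2

lemma mpow_eq_amean_one_iff (hG : 0 ≤ G) (ht : 0 < t) (ht1 : t < 1) :
    mpow G t = amean 1 G t ↔ G = 1 := by
  have hsa := IsSelfAdjoint.of_nonneg hG
  have hcont f := continuousOn_spectrum f G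
  calc mpow G t = amean 1 G t
      ↔ (spectrum ℝ G).EqOn (fun x => x ^ t) (fun x => 1 - t + t * x) := by
        rw [amean_one_eq_cfc hsa, mpow, cfc_eq_cfc_iff_eqOn hsa (hcont _)]
    _ ↔ (spectrum ℝ G).EqOn (fun x => x) (fun _ => 1) := forall₂_congr fun _ hx =>
        rpow_eq_one_sub_add_mul_iff (spectrum_nonneg_of_nonneg hG hx) ht ht1
    _ ↔ G = 1 := by
        rw [← cfc_eq_cfc_iff_eqOn (a := G), cfc_id' ℝ G, cfc_const_one ℝ G]

end Means

theorem smean_eig_le_wmean_eig_general {n : ℕ} (A B : Matrix (Fin n) (Fin n) ℂ)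
    (hA : A.PosDef) (hB : B.PosSemidef) :
    ∀ t : ℝ, 0 < t → t < 1 →
      ∀ (hS : (smean A B t).IsHermitian) (hW : (wmean A B t).IsHermitian),
        (∀ i : Fin n, eigDesc hS i ≤ eigDesc hW i) ∧
        ((∀ i : Fin n, eigDesc hS i = eigDesc hW i) ↔ A = B) := by
  intro t ht ht1 hS hW
  have hG : 0 ≤ gmean A⁻¹ B (1 / 2) := gmean_nonneg _ hB.nonneg _
  have hP := mpow_nonneg hG t
  have hQ := amean_one_nonneg hG ht.le ht1.le
  have hPQ := mpow_sq_le_amean_one_sq hG ht.le ht1.le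
  refine ⟨eigDesc_mul_mul_self_mono hA.posSemidef.nonneg (IsSelfAdjoint.of_nonneg hP)
    (IsSelfAdjoint.of_nonneg hQ) hPQ hS hW, ?_⟩
  calc (∀ i, eigDesc hS i = eigDesc hW i)
      ↔ eigDesc hS = eigDesc hW := funext_iff.symm
    _ ↔ mpow (gmean A⁻¹ B (1 / 2)) t = amean 1 (gmean A⁻¹ B (1 / 2)) t :=
        eigDesc_mul_mul_self_eq_iff hA hP hQ hPQ hS hW
    _ ↔ gmean A⁻¹ B (1 / 2) = 1 := mpow_eq_amean_one_iff hG ht ht1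
    _ ↔ A = B := gmean_inv_half_eq_one_iff hA hB.nonneg

/-- for `t ∈ (0,1)`, `λᵢ(A ♮ₜ B) ≤ λᵢ(A ◇ₜ B)` for every `i`, and equality of
all eigenvalues holds iff `A = B`. -/
theorem smean_eig_le_wmean_eig {n : ℕ} (A B : Matrix (Fin n) (Fin n) ℂ)
    (hA : A.PosDef) (hB : B.PosDef) :
    ∀ t : ℝ, 0 < t → t < 1 →
      ∀ (hS : (smean A B t).IsHermitian) (hW : (wmean A B t).IsHermitian),
        (∀ i : Fin n, eigDesc hS i ≤ eigDesc hW i) ∧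
        ((∀ i : Fin n, eigDesc hS i = eigDesc hW i) ↔ A = B) :=
  smean_eig_le_wmean_eig_general A B hA hB.posSemidef
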